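/- arXiv:math/0401300 — 2 statements merged into one kernel-verified Lean document; each statement's English description precedes it below -/
import Mathlib

section
/- In the ring of formal power series in two variables x, y over ℚ, the identity (1 − ∑_{m≥1, n≥1} T(m,n)·x^m·y^n) · (1 + ∑_{m≥1, n≥1} C_m·C_n·x^m·y^n) = 1 holds; equivalently, 1 + ∑_{m,n≥1} C_m C_n x^m y^n is the multiplicative inverse of 1 − ∑_{m,n≥1} T(m,n) x^m y^n. -/
/-- The super Catalan number `T(m,n) = (1/2) * (2m)! * (2n)! / (m! * n! * (m+n)!)`,
as a rational number. -/
def superCatalan (m n : ℕ) : ℚ :=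
  (Nat.factorial (2 * m) * Nat.factorial (2 * n) : ℚ) /
    (2 * (Nat.factorial m * Nat.factorial n * Nat.factorial (m + n)))

/-- The two-variable power series `1 - ∑_{m,n ≥ 1} T(m,n) x^m y^n`. -/
def superCatalanSeries : MvPowerSeries (Fin 2) ℚ := fun d =>
  if d = 0 then 1 else if 1 ≤ d 0 ∧ 1 ≤ d 1 then -superCatalan (d 0) (d 1) else 0

/-- The two-variable power series `1 + ∑_{m,n ≥ 1} C_m C_n x^m y^n`. -/
def catalanPairSeries : MvPowerSeries (Fin 2) ℚ := fun d =>
  if d = 0 then 1 else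
    if 1 ≤ d 0 ∧ 1 ≤ d 1 then (catalan (d 0) : ℚ) * (catalan (d 1) : ℚ) else 0

/-!
Write `c = c(x)` and `d = c(y)` for the Catalan generating function in each variable, so that
`c = 1 + x c²` and the second factor is `1 + (c - 1)(d - 1)`. The recurrence
`T(m+1,n) + T(m,n+1) = 4 T(m,n)` says that multiplying the first factor by `x + y - 4xy` kills every
coefficient away from the boundary, and `T(m,1) = C_m` identifies what remains there as
`x (1 - y - y d) + y (1 - x - x c)`. As `c⁻¹ = 1 - x c` has square `1 - x - x c`, this is
`x d⁻² + y c⁻²`, and substituting `x = (c - 1) c⁻²`, `y = (d - 1) d⁻²` shows that its product with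
the second factor is again `x + y - 4xy`, which cancels.
-/

open Finsupp (single)
open MvPowerSeries

theorem superCatalan_comm (m n : ℕ) : superCatalan m n = superCatalan n m := by
  simp only [superCatalan, add_comm m n, mul_comm]

theorem superCatalan_succ_left_add_succ_right (m n : ℕ) :
    superCatalan (m + 1) n + superCatalan m (n + 1) = 4 * superCatalan m n := by
  have hmn : (m : ℚ) + n + 1 ≠ 0 := by positivity
  simp only [superCatalan, show m + 1 + n = m + n + 1 by ring, ← add_assoc, mul_add_one,
    Nat.factorial_succ]
  push_cast
  field_simp
  ring

theorem superCatalan_one_right (n : ℕ) : superCatalan n 1 = catalan n := by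
  have hn : (n : ℚ) + 1 ≠ 0 := by positivity
  have hcatalan : ((n : ℚ) + 1) * catalan n = (2 * n).choose n :=
    mod_cast succ_mul_catalan_eq_centralBinom n
  rw [Nat.cast_choose ℚ (by lia : n ≤ 2 * n), show 2 * n - n = n by lia] at hcatalan
  rw [← mul_right_inj' hn, hcatalan, superCatalan]
  simp only [Nat.factorial_succ]
  push_cast
  field_simp

theorem superCatalan_one_left (n : ℕ) : superCatalan 1 n = catalan n := by
  rw [superCatalan_comm, superCatalan_one_right]

theorem coeff_X_mul_eq_ite {σ R : Type*} [Semiring R] (s : σ) (f : MvPowerSeries σ R)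
    (d : σ →₀ ℕ) :
    coeff d (X s * f) = if d s = 0 then 0 else coeff (d - single s 1) f := by
  simp [X, coeff_monomial_mul, Nat.one_le_iff_ne_zero]

section CommRing

variable {σ : Type*} (R : Type*) [CommRing R]

/-- The Catalan generating function `∑ C_n x^n` in the single variable `x = X s` of a multivariate
power series ring. -/
noncomputable def catalanSeriesIn (s : σ) : MvPowerSeries σ R :=
  (PowerSeries.catalanSeries.map (Nat.castRingHom R)).subst (X s : MvPowerSeries σ R)

theorem coeff_catalanSeriesIn [DecidableEq σ] (s : σ) (d : σ →₀ ℕ) :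
    coeff d (catalanSeriesIn R s) = if d = single s (d s) then (catalan (d s) : R) else 0 := by
  simp [catalanSeriesIn, PowerSeries.coeff_subst_single]

theorem catalanSeriesIn_eq_one_add (s : σ) :
    catalanSeriesIn R s = 1 + X s * catalanSeriesIn R s ^ 2 := by
  have hX := PowerSeries.HasSubst.X (S := R) s
  have h := congrArg (fun f ↦ PowerSeries.substAlgHom hX (f.map (Nat.castRingHom R)))
    PowerSeries.catalanSeries_sq_mul_X_add_one
  simp only [map_add, map_mul, map_pow, map_one, PowerSeries.map_X,
    PowerSeries.substAlgHom_X, PowerSeries.coe_substAlgHom] at h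
  rw [catalanSeriesIn]
  linear_combination -h

theorem coeff_catalanSeriesIn_sub_one_mul (d : Fin 2 →₀ ℕ) :
    coeff d ((catalanSeriesIn R (0 : Fin 2) - 1) * (catalanSeriesIn R 1 - 1)) =
      if 1 ≤ d 0 ∧ 1 ≤ d 1 then (catalan (d 0) : R) * catalan (d 1) else 0 := by
  have hsubst (s : Fin 2) : catalanSeriesIn R s - 1 =
      (PowerSeries.catalanSeries.map (Nat.castRingHom R) - 1).subst
        (X s : MvPowerSeries (Fin 2) R) := by
    rw [catalanSeriesIn, ← PowerSeries.coe_substAlgHom (.X s), map_sub, map_one]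
  rw [hsubst, hsubst, PowerSeries.coeff_subst_X_zero_subst_mul_X_one]
  rcases d 0 with _ | m <;> rcases d 1 with _ | n <;>
    simp [PowerSeries.coeff_one, -PowerSeries.coeff_zero_eq_constantCoeff]

end CommRing

theorem catalanPairSeries_eq_one_add_mul :
    catalanPairSeries = 1 + (catalanSeriesIn ℚ 0 - 1) * (catalanSeriesIn ℚ 1 - 1) := by
  ext d
  rw [map_add, coeff_catalanSeriesIn_sub_one_mul, coeff_one]
  by_cases hd : d = 0 <;> simp [coeff_apply, catalanPairSeries, hd]

theorem coeff_superCatalanSeries (d : Fin 2 →₀ ℕ) :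
    coeff d superCatalanSeries =
      if d = 0 then 1 else if 1 ≤ d 0 ∧ 1 ≤ d 1 then -superCatalan (d 0) (d 1) else 0 :=
  rfl

theorem mul_superCatalanSeries :
    (X 0 + X 1 - 4 * X 0 * X 1) * superCatalanSeries =
      X 0 * (1 - X 1 - X 1 * catalanSeriesIn ℚ 1) +
        X 1 * (1 - X 0 - X 0 * catalanSeriesIn ℚ 0) := by
  -- Every term is brought to the form `X s * f`, whose coefficients are `coeff_X_mul_eq_ite`.
  suffices X 0 * superCatalanSeries + X 1 * superCatalanSeries
        - 4 • (X 0 * (X 1 * superCatalanSeries)) =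
      X 0 * 1 + X 1 * 1 - 2 • (X 0 * (X 1 * 1))
        - X 0 * (X 1 * catalanSeriesIn ℚ 1) - X 0 * (X 1 * catalanSeriesIn ℚ 0) by
    linear_combination this
  ext d
  simp only [map_add, map_sub, map_nsmul, coeff_X_mul_eq_ite, coeff_superCatalanSeries,
    coeff_catalanSeriesIn, coeff_one, Finsupp.ext_iff, Fin.forall_fin_two, Finsupp.tsub_apply,
    Finsupp.single_apply, Finsupp.coe_zero, Pi.zero_apply]
  generalize d 0 = m, d 1 = n
  rcases m with _ | _ | m <;> rcases n with _ | _ | n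
  case succ.zero.succ.zero => norm_num
  case succ.succ.succ.succ =>
    have hinterior : -superCatalan (m + 1) (n + 2) + -superCatalan (m + 2) (n + 1)
        + 4 * superCatalan (m + 1) (n + 1) = 0 := by
      linear_combination -superCatalan_succ_left_add_succ_right (m + 1) (n + 1)
    simpa using hinterior
  all_goals simp [superCatalan_one_left, superCatalan_one_right]

theorem exists_inv_of_eq_one_add_mul_sq {R : Type*} [CommRing R] {x c : R}
    (hc : c = 1 + x * c ^ 2) :
    ∃ a, a * c = 1 ∧ 1 - x - x * c = a ^ 2 ∧ x = a ^ 2 * (c - 1) := by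
  refine ⟨1 - x * c, ?_, ?_, ?_⟩
  · linear_combination hc
  · linear_combination x * hc
  · linear_combination (x * (c - 1) - 1) * hc

theorem mul_one_add_mul_of_eq_one_add_mul_sq {R : Type*} [CommRing R] {x y c d : R}
    (hc : c = 1 + x * c ^ 2) (hd : d = 1 + y * d ^ 2) :
    (x * (1 - y - y * d) + y * (1 - x - x * c)) * (1 + (c - 1) * (d - 1)) =
      x + y - 4 * x * y := by
  obtain ⟨a, hac, ha_sq, hx⟩ := exists_inv_of_eq_one_add_mul_sq hc
  obtain ⟨b, hbd, hb_sq, hy⟩ := exists_inv_of_eq_one_add_mul_sq hd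
  calc (x * (1 - y - y * d) + y * (1 - x - x * c)) * (1 + (c - 1) * (d - 1))
    _ = a ^ 2 * b ^ 2 * ((c - 1) + (d - 1)) * (1 + (c - 1) * (d - 1)) := by
      rw [ha_sq, hb_sq, hx, hy]; ring
    _ = a ^ 2 * (c - 1) * (b * d) ^ 2 + b ^ 2 * (d - 1) * (a * c) ^ 2
          - 4 * (a ^ 2 * (c - 1)) * (b ^ 2 * (d - 1)) := by ring
    _ = x + y - 4 * x * y := by rw [hac, hbd, ← hx, ← hy]; ring

theorem X_zero_add_X_one_sub_mul_ne_zero {R : Type*} [CommRing R] [Nontrivial R]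
    (f : MvPowerSeries (Fin 2) R) : X 0 + X 1 - f * X 0 * X 1 ≠ 0 := by
  intro h
  have hcoeff := congrArg (coeff (single 1 1)) h
  rw [mul_comm f, mul_assoc] at hcoeff
  simp [coeff_X_mul_eq_ite, coeff_index_single_X] at hcoeff

theorem superCatalan_series_inverse :
    superCatalanSeries * catalanPairSeries = 1 := by
  refine mul_left_cancel₀ (X_zero_add_X_one_sub_mul_ne_zero 4) ?_
  rw [← mul_assoc, mul_superCatalanSeries, catalanPairSeries_eq_one_add_mul, mul_one]
  exact mul_one_add_mul_of_eq_one_add_mul_sq (catalanSeriesIn_eq_one_add ℚ 0)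
    (catalanSeriesIn_eq_one_add ℚ 1)
end

section
/- For every integer n ≥ 1, the number of ordered pairs (P,Q) of Dyck paths with semilength(P) + semilength(Q) = n such that |h(P) − h(Q)| ≤ 1 equals the super Catalan number T(2,n) = 6·(2n)!/(n!·(n+2)!). -/
/-- A ballot path: a sequence of steps, each `+1` or `-1`, all of whose
partial sums are nonnegative. -/
def IsBallot (P : List ℤ) : Prop :=
  (∀ s ∈ P, s = 1 ∨ s = -1) ∧ ∀ k, 0 ≤ (P.take k).sum

/-- A Dyck path of semilength `n`: a ballot path with `2n` steps ending at level `0`. -/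
def IsDyck (n : ℕ) (P : List ℤ) : Prop :=
  IsBallot P ∧ P.length = 2 * n ∧ P.sum = 0

/-- The height of a path: the maximum of its partial sums (`0` for the empty path). -/
def pathHeight (P : List ℤ) : ℤ :=
  (((List.range (P.length + 1)).map fun k => (P.take k).sum).foldr max 0)

/-!
The first-return decomposition `P = U S D T` identifies Dyck paths with binary trees `(S, T)` and
gives `h(P) = max (h(S) + 1) (h(T))`. So the generating function `E k` of Dyck paths of height less
than `k` satisfies `E 0 = 0` and `E (k + 1) = 1 + X * E k * E (k + 1)`, whence
`(E (k + 1) - E k) * E (k + 2) = E (k + 2) - E k`. Paths of height exactly `k` are counted by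
`G k = E (k + 1) - E k`, and this identity makes `∑ k < K, (G k ^ 2 + 2 * G k * G (k + 1))`
telescope to `2 * (E (K + 1) + E K) - E K ^ 2 - 2`. Up to degree `n < K` every `E K` agrees with
the Catalan series, so close pairs of total semilength `n ≥ 1` number
`4 * catalan n - catalan (n + 1) = T(2, n)`.
-/

open Finset PowerSeries BinaryTree

section PathHeight

lemma foldr_max_le_iff {α : Type*} [LinearOrder α] {l : List α} {a c : α} :
    l.foldr max a ≤ c ↔ a ≤ c ∧ ∀ x ∈ l, x ≤ c := by
  induction l with
  | nil => simp
  | cons b l ih => simp only [List.foldr_cons, max_le_iff, ih, List.forall_mem_cons]; tauto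

lemma pathHeight_le_iff {P : List ℤ} {c : ℤ} : pathHeight P ≤ c ↔ ∀ k, (P.take k).sum ≤ c := by
  simp only [pathHeight, foldr_max_le_iff, List.forall_mem_map, List.mem_range]
  refine ⟨fun ⟨_, h⟩ k ↦ ?_, fun h ↦ ⟨by simpa using h 0, fun k _ ↦ h k⟩⟩
  rw [List.take_eq_take_min]
  exact h _ (by omega)

lemma pathHeight_nonneg (P : List ℤ) : 0 ≤ pathHeight P := by
  simpa using pathHeight_le_iff.1 le_rfl 0

lemma pathHeight_nil : pathHeight [] = 0 := rfl

lemma pathHeight_cons (s : ℤ) (P : List ℤ) :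
    pathHeight (s :: P) = max 0 (s + pathHeight P) := by
  refine eq_of_forall_ge_iff fun c ↦ ?_
  rw [max_le_iff, ← le_sub_iff_add_le', pathHeight_le_iff, pathHeight_le_iff,
    ← Nat.and_forall_add_one]
  simp [le_sub_iff_add_le']

lemma pathHeight_append (P Q : List ℤ) :
    pathHeight (P ++ Q) = max (pathHeight P) (P.sum + pathHeight Q) := by
  induction P with
  | nil => simp [pathHeight_nil, pathHeight_nonneg]
  | cons s P ih =>
    simp only [List.cons_append, pathHeight_cons, ih, List.sum_cons]
    omega

end PathHeight

section Trees

/-- The height increment of a step of a Dyck word. -/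
def stepValue : DyckStep → ℤ
  | .U => 1
  | .D => -1

lemma sum_map_stepValue (L : List DyckStep) :
    (L.map stepValue).sum = L.count .U - L.count .D := by
  induction L with
  | nil => simp
  | cons s L ih => cases s <;> simp [stepValue, ih] <;> ring

lemma stepValue_injective : Function.Injective stepValue := by
  rintro (_ | _) (_ | _) <;> simp [stepValue]

/-- The Dyck path, as a list of integer steps, encoded by a binary tree through Mathlib's bijection
between binary trees and Dyck words. -/
def treePath (T : BinaryTree Unit) : List ℤ := (DyckWord.ofTree T).toList.map stepValue

lemma treePath_node (S T : BinaryTree Unit) :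
    treePath (S △ T) = 1 :: (treePath S ++ -1 :: treePath T) := by
  change List.map stepValue (([.U] ++ (DyckWord.ofTree S).toList ++ [.D]) ++
    (DyckWord.ofTree T).toList) = _
  simp [treePath, stepValue]

lemma sum_treePath (T : BinaryTree Unit) : (treePath T).sum = 0 := by
  rw [treePath, sum_map_stepValue, DyckWord.count_U_eq_count_D, sub_self]

lemma treePath_injective : Function.Injective treePath := fun _ _ h ↦
  DyckWord.equivTree.symm.injective (DyckWord.ext (stepValue_injective.list_map h))

lemma isDyck_map_stepValue_iff {n : ℕ} {L : List DyckStep} :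
    IsDyck n (L.map stepValue) ↔ ∃ w : DyckWord, w.semilength = n ∧ w.toList = L := by
  simp only [IsDyck, IsBallot, ← List.map_take, sum_map_stepValue, List.length_map]
  constructor
  · rintro ⟨⟨_, hnonneg⟩, hlen, hsum⟩
    let w : DyckWord := ⟨L, by omega, fun k ↦ by have := hnonneg k; omega⟩
    have hw : 2 * w.semilength = L.length := w.two_mul_semilength_eq_length
    exact ⟨w, by omega, rfl⟩
  · rintro ⟨w, rfl, rfl⟩
    refine ⟨⟨?_, fun k ↦ ?_⟩, w.two_mul_semilength_eq_length.symm, ?_⟩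
    · simp only [List.forall_mem_map]
      rintro (_ | _) _ <;> simp [stepValue]
    · have := w.count_D_le_count_U k
      omega
    · rw [w.count_U_eq_count_D, sub_self]

lemma isDyck_iff_exists_treePath {n : ℕ} {P : List ℤ} :
    IsDyck n P ↔ ∃ T : BinaryTree Unit, T.numNodes = n ∧ treePath T = P := by
  constructor
  · intro hP
    obtain ⟨L, rfl⟩ : P ∈ Set.range (List.map stepValue) := by
      rw [Set.range_list_map]
      intro s hs
      rcases hP.1.1 s hs with rfl | rfl
      exacts [⟨.U, rfl⟩, ⟨.D, rfl⟩]
    obtain ⟨w, rfl, rfl⟩ := isDyck_map_stepValue_iff.1 hP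
    exact ⟨w.toTree, w.numNodes_toTree, by rw [treePath, w.ofTree_toTree]⟩
  · rintro ⟨T, rfl, rfl⟩
    refine isDyck_map_stepValue_iff.2 ⟨_, ?_, rfl⟩
    rw [← DyckWord.numNodes_toTree, DyckWord.toTree_ofTree]

/-- The height of the Dyck path encoded by a binary tree, which is the largest number of left edges
on a path from the root to a leaf; it is not `BinaryTree.height`. -/
def leftHeight : BinaryTree Unit → ℕ
  | nil => 0
  | node _ S T => max (leftHeight S + 1) (leftHeight T)

lemma pathHeight_treePath (T : BinaryTree Unit) : pathHeight (treePath T) = leftHeight T := by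
  induction T using BinaryTree.unitRecOn with
  | base => rfl
  | ind S T ihS ihT =>
    rw [treePath_node, pathHeight_cons, pathHeight_append, pathHeight_cons, sum_treePath, ihS, ihT,
      leftHeight]
    omega

lemma leftHeight_le_numNodes (T : BinaryTree Unit) : leftHeight T ≤ T.numNodes := by
  induction T using BinaryTree.unitRecOn with
  | base => rfl
  | ind S T ihS ihT => simp only [leftHeight, numNodes]; omega

end Trees

section TreeSeries

/-- The pairs of binary trees with `n` nodes in total. -/
def treePairs (n : ℕ) : Finset (BinaryTree Unit × BinaryTree Unit) :=
  (antidiagonal n).biUnion fun ij ↦ treesOfNumNodesEq ij.1 ×ˢ treesOfNumNodesEq ij.2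

lemma mem_treePairs {n : ℕ} {ST : BinaryTree Unit × BinaryTree Unit} :
    ST ∈ treePairs n ↔ ST.1.numNodes + ST.2.numNodes = n := by
  simp [treePairs]

/-- The generating function, by number of nodes, of the binary trees satisfying `p`. -/
noncomputable def treeSeries (p : BinaryTree Unit → Prop) [DecidablePred p] : ℤ⟦X⟧ :=
  .mk fun n ↦ (#{T ∈ treesOfNumNodesEq n | p T} : ℤ)

lemma coeff_treeSeries (p : BinaryTree Unit → Prop) [DecidablePred p] (n : ℕ) :
    coeff n (treeSeries p) = #{T ∈ treesOfNumNodesEq n | p T} :=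
  coeff_mk ..

lemma coeff_treeSeries_mul (p q : BinaryTree Unit → Prop) [DecidablePred p] [DecidablePred q]
    (n : ℕ) :
    coeff n (treeSeries p * treeSeries q) = #{ST ∈ treePairs n | p ST.1 ∧ q ST.2} := by
  rw [treePairs, filter_biUnion, card_biUnion, coeff_mul]
  · simp only [filter_product, card_product, coeff_treeSeries, Nat.cast_sum, Nat.cast_mul]
  · rintro ⟨i, j⟩ _ ⟨i', j'⟩ _ hne
    simp only [Function.onFun, disjoint_left, mem_filter, mem_product, mem_treesOfNumNodesEq]
    grind

/-- The generating function of the binary trees of left height less than `k`, that is, of the Dyck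
paths of height less than `k`. -/
noncomputable def heightSeries (k : ℕ) : ℤ⟦X⟧ := treeSeries (leftHeight · < k)

lemma heightSeries_zero : heightSeries 0 = 0 := by
  ext n
  simp [heightSeries, coeff_treeSeries]

lemma heightSeries_succ (k : ℕ) :
    heightSeries (k + 1) = 1 + X * (heightSeries k * heightSeries (k + 1)) := by
  ext n
  cases n with
  | zero => simp [heightSeries, coeff_treeSeries, leftHeight, filter_singleton]
  | succ n =>
    rw [map_add, coeff_succ_X_mul, coeff_one, if_neg n.succ_ne_zero, zero_add, heightSeries,
      heightSeries, coeff_treeSeries_mul, coeff_treeSeries, Nat.cast_inj]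
    symm
    refine card_bij (fun ST _ ↦ ST.1 △ ST.2) ?_ ?_ ?_
    · intro ST hST
      simp only [mem_filter, mem_treePairs, mem_treesOfNumNodesEq, numNodes, leftHeight] at hST ⊢
      omega
    · rintro ⟨S, T⟩ _ ⟨S', T'⟩ _ h
      simpa using h
    · rintro (_ | ⟨_, S, T⟩) hT
      · simp [numNodes] at hT
      · refine ⟨(S, T), ?_, rfl⟩
        simp only [mem_filter, mem_treePairs, mem_treesOfNumNodesEq, numNodes, leftHeight] at hT ⊢
        omega

lemma treeSeries_leftHeight_eq (k : ℕ) :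
    treeSeries (leftHeight · = k) = heightSeries (k + 1) - heightSeries k := by
  ext n
  simp only [heightSeries, map_sub, coeff_treeSeries, card_filter, Nat.cast_sum,
    ← sum_sub_distrib]
  refine sum_congr rfl fun T _ ↦ ?_
  split_ifs <;> first | rfl | omega

lemma coeff_heightSeries {n k : ℕ} (h : n < k) : coeff n (heightSeries k) = catalan n := by
  rw [heightSeries, coeff_treeSeries, filter_true_of_mem, treesOfNumNodesEq_card_eq_catalan]
  intro T hT
  have := leftHeight_le_numNodes T
  rw [mem_treesOfNumNodesEq] at hT
  omega

lemma coeff_heightSeries_sq {n k : ℕ} (h : n < k) :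
    coeff n (heightSeries k ^ 2 : ℤ⟦X⟧) = (catalan (n + 1) : ℤ) := by
  rw [sq, coeff_mul, catalan_succ', Nat.cast_sum]
  refine sum_congr rfl fun ij hij ↦ ?_
  have := mem_antidiagonal.1 hij
  rw [coeff_heightSeries (by omega), coeff_heightSeries (by omega), Nat.cast_mul]

end TreeSeries

section Telescoping

variable {R : Type*} [CommRing R] {t : R} {E : ℕ → R}

lemma sub_mul_eq_sub_of_recurrence (hE : ∀ k, E (k + 1) = 1 + t * (E k * E (k + 1))) (k : ℕ) :
    (E (k + 1) - E k) * E (k + 2) = E (k + 2) - E k := by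
  linear_combination E (k + 2) * hE k - E k * hE (k + 1)

lemma sum_range_close_of_recurrence (hE₀ : E 0 = 0)
    (hE : ∀ k, E (k + 1) = 1 + t * (E k * E (k + 1))) (K : ℕ) :
    ∑ k ∈ range K, ((E (k + 1) - E k) ^ 2 + 2 * ((E (k + 1) - E k) * (E (k + 2) - E (k + 1)))) =
      2 * (E (K + 1) + E K) - E K ^ 2 - 2 := by
  have hE₁ : E 1 = 1 := by simpa [hE₀] using hE 0
  calc
    _ = ∑ k ∈ range K, ((2 * (E (k + 2) + E (k + 1)) - E (k + 1) ^ 2) -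
          (2 * (E (k + 1) + E k) - E k ^ 2)) :=
      sum_congr rfl fun k _ ↦ by linear_combination 2 * sub_mul_eq_sub_of_recurrence hE k
    _ = _ := by
      rw [sum_range_sub fun k ↦ 2 * (E (k + 1) + E k) - E k ^ 2, hE₀, zero_add, hE₁]
      ring

end Telescoping

section ClosePairs

lemma card_filter_abs_sub_le_one {α : Type*} {s : Finset α} {f g : α → ℕ} {K : ℕ}
    (h : ∀ x ∈ s, min (f x) (g x) < K) :
    #{x ∈ s | |(f x : ℤ) - g x| ≤ 1} = ∑ k ∈ range K, (#{x ∈ s | f x = k ∧ g x = k} +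
      (#{x ∈ s | f x = k ∧ g x = k + 1} + #{x ∈ s | f x = k + 1 ∧ g x = k})) := by
  rw [card_eq_sum_card_fiberwise (f := fun x ↦ min (f x) (g x)) (t := range K)
    fun x hx ↦ by simpa using h x (mem_filter.1 hx).1]
  refine sum_congr rfl fun k _ ↦ ?_
  simp only [filter_filter, card_filter, ← sum_add_distrib, abs_le]
  refine sum_congr rfl fun x _ ↦ ?_
  split_ifs <;> omega

/-- The pairs of binary trees with `n` nodes in total whose Dyck paths have heights differing by at
most one. -/
def closeTreePairs (n : ℕ) : Finset (BinaryTree Unit × BinaryTree Unit) :=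
  {ST ∈ treePairs n | |(leftHeight ST.1 : ℤ) - leftHeight ST.2| ≤ 1}

lemma card_closeTreePairs_eq_coeff {n K : ℕ} (hK : n < K) :
    (#(closeTreePairs n) : ℤ) =
      coeff n (2 * (heightSeries (K + 1) + heightSeries K) - heightSeries K ^ 2 - 2) := by
  have hmin : ∀ ST ∈ treePairs n, min (leftHeight ST.1) (leftHeight ST.2) < K := by
    intro ST hST
    have := leftHeight_le_numNodes ST.1
    rw [mem_treePairs] at hST
    omega
  rw [closeTreePairs, card_filter_abs_sub_le_one hmin,
    ← sum_range_close_of_recurrence heightSeries_zero heightSeries_succ, map_sum, Nat.cast_sum]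
  refine sum_congr rfl fun k _ ↦ ?_
  have hsymm (G G' : ℤ⟦X⟧) : G ^ 2 + 2 * (G * G') = G * G + (G * G' + G' * G) := by ring
  simp only [← treeSeries_leftHeight_eq, hsymm, map_add, coeff_treeSeries_mul, Nat.cast_add]

lemma card_closeTreePairs {n : ℕ} (hn : 1 ≤ n) :
    (#(closeTreePairs n) : ℤ) = 4 * catalan n - catalan (n + 1) := by
  have hconst : coeff n (2 : ℤ⟦X⟧) = 0 := by
    rw [← map_ofNat C, coeff_C, if_neg (by omega)]
  rw [card_closeTreePairs_eq_coeff n.lt_succ_self, map_sub, map_sub, two_mul, map_add, map_add,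
    coeff_heightSeries (by omega), coeff_heightSeries (by omega), coeff_heightSeries_sq (by omega),
    hconst]
  ring

lemma mem_image_treePath_closeTreePairs {n : ℕ} {PQ : List ℤ × List ℤ} :
    PQ ∈ (closeTreePairs n).image (Prod.map treePath treePath) ↔
      (∃ a b : ℕ, IsDyck a PQ.1 ∧ IsDyck b PQ.2 ∧ a + b = n) ∧
        |pathHeight PQ.1 - pathHeight PQ.2| ≤ 1 := by
  obtain ⟨P, Q⟩ := PQ
  simp only [isDyck_iff_exists_treePath, closeTreePairs, mem_image, mem_filter, mem_treePairs,
    Prod.exists, Prod.map_apply, Prod.mk.injEq]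
  constructor
  · rintro ⟨S, T, ⟨hST, hclose⟩, rfl, rfl⟩
    rw [pathHeight_treePath, pathHeight_treePath]
    exact ⟨⟨_, _, ⟨S, rfl, rfl⟩, ⟨T, rfl, rfl⟩, hST⟩, hclose⟩
  · rintro ⟨⟨_, _, ⟨S, rfl, rfl⟩, ⟨T, rfl, rfl⟩, hST⟩, hclose⟩
    rw [pathHeight_treePath, pathHeight_treePath] at hclose
    exact ⟨S, T, ⟨hST, hclose⟩, rfl, rfl⟩

end ClosePairs

section SuperCatalan

lemma catalan_eq_factorial_div (n : ℕ) :
    (catalan n : ℚ) = (2 * n).factorial / (n.factorial * (n + 1).factorial) := by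
  have h₁ : ((n : ℚ) + 1) * catalan n = n.centralBinom := by
    exact_mod_cast succ_mul_catalan_eq_centralBinom n
  rw [Nat.centralBinom, Nat.cast_choose ℚ (by omega : n ≤ 2 * n), two_mul,
    Nat.add_sub_cancel, ← two_mul] at h₁
  rw [Nat.factorial_succ]
  push_cast
  field_simp at h₁ ⊢
  linear_combination h₁

lemma superCatalan_two (n : ℕ) : superCatalan 2 n = 4 * catalan n - catalan (n + 1) := by
  rw [superCatalan, catalan_eq_factorial_div, catalan_eq_factorial_div, mul_add_one 2 n,
    add_comm 2 n]
  simp only [Nat.factorial_succ, Nat.factorial_zero]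
  push_cast
  field_simp
  ring

end SuperCatalan

theorem card_pairs_heights_close (n : ℕ) (hn : 1 ≤ n) :
    (Nat.card {PQ : List ℤ × List ℤ //
        (∃ a b : ℕ, IsDyck a PQ.1 ∧ IsDyck b PQ.2 ∧ a + b = n) ∧
          |pathHeight PQ.1 - pathHeight PQ.2| ≤ 1} : ℚ) = superCatalan 2 n := by
  rw [Nat.subtype_card _ fun _ ↦ mem_image_treePath_closeTreePairs,
    card_image_of_injective _ (treePath_injective.prodMap treePath_injective), superCatalan_two]
  exact_mod_cast card_closeTreePairs hn
end
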